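/- (Aronszajn–Krein-type formula, second identity.) For every f ∈ L²(μ), every α ∈ ℝ, and every z ∈ ℂ∖ℝ, one has 𝒦_{f_α μ_α}(z)·𝒦_{μ}(z) = 𝒦_{f μ}(z)·𝒦_{μ_α}(z), where f_α = V_α f; equivalently, the normalized Cauchy transform 𝒦_{f_α μ_α}/𝒦_{μ_α} is independent of α and equals 𝒦_{fμ}/𝒦_{μ} on ℂ∖ℝ. -/

import Mathlib

/-!
For `w = conj z`, the value `𝒦_{fμ}(z)` is the inner product of the Cauchy kernel `(t - w)⁻¹` with
`f` in `L²(μ)`. The unitary `V_α` takes the solution `g` of `(A_α - w) g = 1` to the Cauchy kernel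
of `L²(μ_α)`. On the other hand that equation reads `(t - w) g = 1 - α ⟪1, g⟫` in `L²(μ)`, so `g`
is a scalar multiple of the Cauchy kernel of `L²(μ)`. Pairing `g` with `f`, on either side of `V_α`,
gives `𝒦_{f_α μ_α} = (1 - α 𝒦_{μ_α}) 𝒦_{fμ}`, whose first factor does not depend on `f`; it is
eliminated against the case `f = 1`, which is the classical Aronszajn–Krein formula.
-/

open MeasureTheory Complex Set

local notation "⟪" x ", " y "⟫" => @inner ℂ _ _ x y

open scoped ComplexConjugate ENNReal

lemma ofReal_sub_ne_zero_of_im_ne_zero {w : ℂ} (hw : w.im ≠ 0) (t : ℝ) : (t : ℂ) - w ≠ 0 :=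
  fun h => hw (by simpa using congrArg Complex.im h)

/-- The Cauchy transform `𝒦_{gν}(z)` of the measure `g ν`; the Cauchy transform of `ν` itself is
the case `g = 1`. -/
noncomputable def cauchyTransform (ν : Measure ℝ) (g : ℝ → ℂ) (z : ℂ) : ℂ :=
  ∫ t, g t * ((t : ℂ) - z)⁻¹ ∂ν

lemma cauchyTransform_one (ν : Measure ℝ) (z : ℂ) :
    cauchyTransform ν 1 z = ∫ t, ((t : ℂ) - z)⁻¹ ∂ν := by
  simp [cauchyTransform]

lemma cauchyTransform_congr_ae {ν : Measure ℝ} {g h : ℝ → ℂ} (hgh : g =ᵐ[ν] h) (z : ℂ) :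
    cauchyTransform ν g z = cauchyTransform ν h z :=
  integral_congr_ae (hgh.mono fun t ht => congrArg (· * ((t : ℂ) - z)⁻¹) ht)

lemma cauchyTransform_const_one (ν : Measure ℝ) [IsFiniteMeasure ν] (z : ℂ) :
    cauchyTransform ν (Lp.const 2 ν (1 : ℂ)) z = cauchyTransform ν 1 z :=
  cauchyTransform_congr_ae (Lp.coeFn_const 2 ν 1) z

section CauchyKernel

variable (ν : Measure ℝ) [IsFiniteMeasure ν]

lemma memLp_inv_ofReal_sub (p : ℝ≥0∞) {w : ℂ} (hw : w.im ≠ 0) :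
    MemLp (fun t : ℝ => ((t : ℂ) - w)⁻¹) p ν := by
  refine MemLp.of_bound (C := |w.im|⁻¹) (by fun_prop) (.of_forall fun t => ?_)
  rw [norm_inv]
  refine inv_anti₀ (abs_pos.mpr hw) ?_
  simpa using Complex.abs_im_le_norm ((t : ℂ) - w)

/-- The Cauchy kernel `t ↦ (t - w)⁻¹` as an element of `L²(ν)`. By `inner_cauchyKernel`, the kernel
at `w = conj z` represents the functional `f ↦ 𝒦_{fν}(z)`. -/
noncomputable def cauchyKernel {w : ℂ} (hw : w.im ≠ 0) : Lp ℂ 2 ν :=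
  (memLp_inv_ofReal_sub ν 2 hw).toLp

lemma coeFn_cauchyKernel {w : ℂ} (hw : w.im ≠ 0) :
    cauchyKernel ν hw =ᵐ[ν] fun t : ℝ => ((t : ℂ) - w)⁻¹ :=
  (memLp_inv_ofReal_sub ν 2 hw).coeFn_toLp

lemma inner_cauchyKernel {z : ℂ} (hz : (conj z).im ≠ 0) (f : Lp ℂ 2 ν) :
    ⟪cauchyKernel ν hz, f⟫ = cauchyTransform ν f z := by
  rw [L2.inner_def]
  refine integral_congr_ae ?_
  filter_upwards [coeFn_cauchyKernel ν hz] with t ht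
  simp [RCLike.inner_apply, ht]

variable {ν}

lemma eq_smul_cauchyKernel {w : ℂ} (hw : w.im ≠ 0) {g : Lp ℂ 2 ν} {c : ℂ}
    (hg : ∀ᵐ t : ℝ ∂ν, ((t : ℂ) - w) * g t = c) : g = c • cauchyKernel ν hw := by
  apply Lp.ext
  filter_upwards [hg, coeFn_cauchyKernel ν hw, Lp.coeFn_smul c (cauchyKernel ν hw)]
    with t hgt hkernel hsmul
  rw [hsmul, Pi.smul_apply, hkernel, smul_eq_mul,
    eq_mul_inv_iff_mul_eq₀ (ofReal_sub_ne_zero_of_im_ne_zero hw t), mul_comm, hgt]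

end CauchyKernel

section RankOnePerturbation

variable {μ ν : Measure ℝ} [IsFiniteMeasure μ] [IsFiniteMeasure ν] {A : Lp ℂ 2 μ → Lp ℂ 2 μ}

lemma sub_smul_eq_const_one_of_map_eq_cauchyKernel (V : Lp ℂ 2 μ ≃ₗ[ℂ] Lp ℂ 2 ν)
    (hV : ∀ g, V (A g) =ᵐ[ν] fun t => t * V g t)
    (hV1 : V (Lp.const 2 μ 1) = Lp.const 2 ν 1)
    {w : ℂ} (hw : w.im ≠ 0) {g : Lp ℂ 2 μ} (hg : V g = cauchyKernel ν hw) :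
    A g - w • g = Lp.const 2 μ 1 := by
  apply V.injective
  rw [map_sub, map_smul, hV1]
  apply Lp.ext
  filter_upwards [hV g, hg ▸ coeFn_cauchyKernel ν hw, Lp.coeFn_const 2 ν (1 : ℂ),
    Lp.coeFn_sub (V (A g)) (w • V g), Lp.coeFn_smul w (V g)] with t hVA hkernel hconst hsub hsmul
  rw [hsub, Pi.sub_apply, hsmul, Pi.smul_apply, hVA, hkernel, hconst, smul_eq_mul, ← sub_mul]
  exact mul_inv_cancel₀ (ofReal_sub_ne_zero_of_im_ne_zero hw t)

lemma eq_smul_cauchyKernel_of_sub_smul_eq_const_one {w : ℂ} (hw : w.im ≠ 0) {g : Lp ℂ 2 μ} {c : ℂ}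
    (hA : A g =ᵐ[μ] fun t => t * g t + c) (hg : A g - w • g = Lp.const 2 μ 1) :
    g = (1 - c) • cauchyKernel μ hw := by
  apply eq_smul_cauchyKernel
  filter_upwards [hA, hg ▸ Lp.coeFn_sub (A g) (w • g), Lp.coeFn_smul w g,
    Lp.coeFn_const 2 μ (1 : ℂ)] with t hAg hsub hsmul hconst
  rw [hconst, Pi.sub_apply, hsmul, hAg, Pi.smul_apply, smul_eq_mul, Function.const_apply] at hsub
  rw [hsub]
  ring

theorem cauchyTransform_map_eq_one_sub_mul {α : ℝ}
    (hA : ∀ g, A g =ᵐ[μ] fun t => t * g t + α * ⟪Lp.const 2 μ 1, g⟫)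
    (V : Lp ℂ 2 μ ≃ₗᵢ[ℂ] Lp ℂ 2 ν) (hV : ∀ g, V (A g) =ᵐ[ν] fun t => t * V g t)
    (hV1 : V (Lp.const 2 μ 1) = Lp.const 2 ν 1) (f : Lp ℂ 2 μ) {z : ℂ} (hz : z.im ≠ 0) :
    cauchyTransform ν (V f) z = (1 - α * cauchyTransform ν 1 z) * cauchyTransform μ f z := by
  have hw : (conj z).im ≠ 0 := by simpa using hz
  obtain ⟨g, hVg⟩ := V.surjective (cauchyKernel ν hw)
  have hinner (h : Lp ℂ 2 μ) : ⟪g, h⟫ = cauchyTransform ν (V h) z := by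
    rw [← V.inner_map_map, hVg, inner_cauchyKernel]
  have hg : g = (1 - α * ⟪Lp.const 2 μ 1, g⟫) • cauchyKernel μ hw :=
    eq_smul_cauchyKernel_of_sub_smul_eq_const_one hw (hA g)
      (sub_smul_eq_const_one_of_map_eq_cauchyKernel V.toLinearEquiv hV hV1 hw hVg)
  have hcoeff : conj (1 - α * ⟪Lp.const 2 μ 1, g⟫) = 1 - α * cauchyTransform ν 1 z := by
    rw [map_sub, map_one, map_mul, conj_ofReal, inner_conj_symm, hinner, hV1,
      cauchyTransform_const_one]
  calc cauchyTransform ν (V f) z = ⟪g, f⟫ := (hinner f).symm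
    _ = conj (1 - α * ⟪Lp.const 2 μ 1, g⟫) * ⟪cauchyKernel μ hw, f⟫ := by
      conv_lhs => rw [hg, inner_smul_left]
    _ = (1 - α * cauchyTransform ν 1 z) * cauchyTransform μ f z := by
      rw [hcoeff, inner_cauchyKernel]

theorem cauchyTransform_one_eq_one_sub_mul {α : ℝ}
    (hA : ∀ g, A g =ᵐ[μ] fun t => t * g t + α * ⟪Lp.const 2 μ 1, g⟫)
    (V : Lp ℂ 2 μ ≃ₗᵢ[ℂ] Lp ℂ 2 ν) (hV : ∀ g, V (A g) =ᵐ[ν] fun t => t * V g t)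
    (hV1 : V (Lp.const 2 μ 1) = Lp.const 2 ν 1) {z : ℂ} (hz : z.im ≠ 0) :
    cauchyTransform ν 1 z = (1 - α * cauchyTransform ν 1 z) * cauchyTransform μ 1 z := by
  simpa only [hV1, cauchyTransform_const_one] using
    cauchyTransform_map_eq_one_sub_mul hA V hV hV1 (Lp.const 2 μ 1) hz

end RankOnePerturbation

/-- **Aronszajn–Krein-type formula, second identity.**
For every `f ∈ L²(μ)`, every `α ∈ ℝ` and nonreal `z`,
`𝒦_{f_α μ_α}(z)·𝒦_μ(z) = 𝒦_{fμ}(z)·𝒦_{μ_α}(z)`, i.e. the normalized Cauchy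
transform `𝒦_{f_α μ_α}/𝒦_{μ_α}` is independent of `α`. -/
theorem aronszajn_krein_second_identity
{μ : Measure ℝ} [IsFiniteMeasure μ]
    (hsupp : ∃ K : Set ℝ, IsCompact K ∧ μ Kᶜ = 0)
    (one : Lp ℂ 2 μ) (hone : (one : ℝ → ℂ) =ᵐ[μ] fun _ => 1)
    (A : ℝ → (Lp ℂ 2 μ →L[ℂ] Lp ℂ 2 μ))
    (hA : ∀ (α : ℝ) (g : Lp ℂ 2 μ),
      (A α g : ℝ → ℂ) =ᵐ[μ] fun t => t * g t + (α : ℂ) * ⟪one, g⟫)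
    (μm : ℝ → Measure ℝ)
    (hμm_fin : ∀ α, IsFiniteMeasure (μm α))
    (hμm0 : μm 0 = μ)
    (hres : ∀ (α : ℝ) (z : ℂ), z.im ≠ 0 → ∀ g : Lp ℂ 2 μ,
      A α g - z • g = one → ⟪one, g⟫ = ∫ t, ((t : ℂ) - z)⁻¹ ∂(μm α))
    (V : ∀ α : ℝ, Lp ℂ 2 μ ≃ₗᵢ[ℂ] Lp ℂ 2 (μm α))
    (hV : ∀ (α : ℝ) (g : Lp ℂ 2 μ),
      (V α (A α g) : ℝ → ℂ) =ᵐ[μm α] fun t => t * (V α g) t)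
    (hV1 : ∀ α : ℝ, (V α one : ℝ → ℂ) =ᵐ[μm α] fun _ => 1)
    (f : Lp ℂ 2 μ) (α : ℝ) (z : ℂ) (hz : z.im ≠ 0) :
    (∫ t, (V α f : ℝ → ℂ) t * ((t : ℂ) - z)⁻¹ ∂(μm α)) *
        (∫ t, ((t : ℂ) - z)⁻¹ ∂μ)
      = (∫ t, (f : ℝ → ℂ) t * ((t : ℂ) - z)⁻¹ ∂μ) *
        (∫ t, ((t : ℂ) - z)⁻¹ ∂(μm α)) := by
  have := hμm_fin α
  obtain rfl : one = Lp.const 2 μ 1 := Lp.ext (hone.trans (Lp.coeFn_const 2 μ 1).symm)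
  have hV1' : V α (Lp.const 2 μ 1) = Lp.const 2 (μm α) 1 :=
    Lp.ext ((hV1 α).trans (Lp.coeFn_const 2 (μm α) 1).symm)
  simp only [← cauchyTransform_one]
  change cauchyTransform (μm α) (V α f) z * cauchyTransform μ 1 z
    = cauchyTransform μ f z * cauchyTransform (μm α) 1 z
  calc cauchyTransform (μm α) (V α f) z * cauchyTransform μ 1 z
      = cauchyTransform μ f z *
          ((1 - α * cauchyTransform (μm α) 1 z) * cauchyTransform μ 1 z) := by
        rw [cauchyTransform_map_eq_one_sub_mul (hA α) (V α) (hV α) hV1' f hz]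
        ring
    _ = cauchyTransform μ f z * cauchyTransform (μm α) 1 z := by
        rw [← cauchyTransform_one_eq_one_sub_mul (hA α) (V α) (hV α) hV1' hz]
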